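/- Let Ω be an unbounded domain in ℂⁿ. If there exists a bounded continuous positive plurisubharmonic function φ on Ω with φ(z) → 0 as ‖z‖ → ∞ (a strong antipeak function at infinity), then Ω is Kobayashi hyperbolic. -/

import Mathlib

open Metric Set

noncomputable def kob {E : Type*} [NormedAddCommGroup E] [NormedSpace ℂ E]
    (Ω : Set E) (z v : E) : ℝ :=
  sInf {c : ℝ | ∃ r : ℝ, 0 < r ∧ c = 1 / r ∧ ∃ f : ℂ → E,
    DifferentiableOn ℂ f (ball (0 : ℂ) r) ∧ f 0 = z ∧ deriv f 0 = v ∧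
    MapsTo f (ball (0 : ℂ) r) Ω}

/-- A set `Ω` is Kobayashi hyperbolic if around every point the Kobayashi
pseudometric admits a positive lower bound comparable to the norm. -/
def KobayashiHyperbolic {E : Type*} [NormedAddCommGroup E] [NormedSpace ℂ E]
    (Ω : Set E) : Prop :=
  ∀ p ∈ Ω, ∃ U ∈ nhds p, ∃ c > 0, ∀ q ∈ U ∩ Ω, ∀ v : E, c * ‖v‖ ≤ kob Ω q v

/-- Sub-mean value inequality on all closed disks contained in `S`. -/
def SubmeanOn (u : ℂ → ℝ) (S : Set ℂ) : Prop :=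
  ∀ c : ℂ, ∀ s : ℝ, 0 < s → closedBall c s ⊆ S →
    u c ≤ (2 * Real.pi)⁻¹ *
      ∫ θ in (0 : ℝ)..(2 * Real.pi), u (c + (s : ℂ) * Complex.exp ((θ : ℂ) * Complex.I))

def SubharmonicOn (u : ℂ → ℝ) (S : Set ℂ) : Prop :=
  UpperSemicontinuousOn u S ∧ SubmeanOn u S

/-- Plurisubharmonic: upper semicontinuous and subharmonic on every complex line. -/
def PSHOn {E : Type*} [NormedAddCommGroup E] [NormedSpace ℂ E]
    (u : E → ℝ) (Ω : Set E) : Prop :=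
  UpperSemicontinuousOn u Ω ∧
    ∀ a b : E, SubmeanOn (fun lam : ℂ => u (a + lam • b)) {lam : ℂ | a + lam • b ∈ Ω}

open Filter Topology MeasureTheory

lemma avg_contra {u : ℂ → ℝ} {G : ℂ → ℂ} {z0 : ℂ} {C κ : ℝ} (hC : 0 ≤ C) (hκ : 0 < κ)
    (hu : ∀ᶠ z in 𝓝 z0, ContinuousAt u z) (hG : ∀ᶠ z in 𝓝 z0, DifferentiableAt ℂ G z)
    (hsub : ∀ k > 0, ∀ᶠ t in 𝓝[>] (0:ℝ), u z0 - k * t ^ 2 ≤ Real.circleAverage u z0 t)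
    (hmax : ∀ᶠ z in 𝓝 z0, C * u z + (G z).re + κ * ‖z - z0‖ ^ 2 ≤ C * u z0 + (G z0).re) :
    False := by
  obtain ⟨ε, hε, hall⟩ := Metric.eventually_nhds_iff.1 (hu.and (hG.and hmax))
  have hk : 0 < κ / (C + 1) := by positivity
  have h1 := hsub _ hk
  have h2 : ∀ᶠ t in 𝓝[>] (0:ℝ), t ∈ Ioo 0 ε := Ioo_mem_nhdsGT hε
  obtain ⟨t, ht, ht0, htε⟩ := (h1.and h2).exists
  have habs : |t| = t := abs_of_pos ht0
  have hmem : ∀ z ∈ closedBall z0 |t|, dist z z0 < ε := by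
    intro z hz
    rw [habs] at hz
    exact lt_of_le_of_lt (mem_closedBall.1 hz) htε
  have hcu : CircleIntegrable u z0 t := by
    apply ContinuousOn.circleIntegrable'
    intro z hz
    exact (hall (hmem z (sphere_subset_closedBall hz))).1.continuousWithinAt
  have hGd : DiffContOnCl ℂ G (ball z0 |t|) := by
    apply DifferentiableOn.diffContOnCl
    rw [closure_ball _ (by simpa using ht0.ne')]
    intro z hz
    exact (hall (hmem z hz)).2.1.differentiableWithinAt
  have hGi : CircleIntegrable G z0 t := by
    apply ContinuousOn.circleIntegrable'
    intro z hz
    exact (hall (hmem z (sphere_subset_closedBall hz))).2.1.continuousAt.continuousWithinAt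
  have hGr : CircleIntegrable (Complex.reCLM ∘ G) z0 t := by
    apply ContinuousOn.circleIntegrable'
    intro z hz
    exact (Complex.reCLM.continuous.continuousAt.comp
      (hall (hmem z (sphere_subset_closedBall hz))).2.1.continuousAt).continuousWithinAt
  have hav : Real.circleAverage (Complex.reCLM ∘ G) z0 t = (G z0).re := by
    rw [ContinuousLinearMap.circleAverage_comp_comm _ hGi, hGd.circleAverage]; rfl
  have hCu : CircleIntegrable (C • u) z0 t := hcu.const_smul
  have key : Real.circleAverage (C • u + Complex.reCLM ∘ G) z0 t
      ≤ C * u z0 + (G z0).re - κ * t ^ 2 := by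
    apply Real.circleAverage_mono_on_of_le_circle (hCu.add hGr)
    intro z hz
    have := (hall (hmem z (sphere_subset_closedBall hz))).2.2
    have hz' : ‖z - z0‖ = t := by rw [← habs]; simpa using hz
    rw [hz'] at this
    simp
    linarith
  rw [Real.circleAverage_add hCu hGr, hav, Real.circleAverage_smul, smul_eq_mul] at key
  have h3 : C * (u z0 - κ / (C + 1) * t ^ 2) ≤ C * Real.circleAverage u z0 t :=
    mul_le_mul_of_nonneg_left ht hC
  have h4 : C * (κ / (C + 1)) < κ := by
    rw [← mul_div_assoc, div_lt_iff₀ (by positivity)]; nlinarith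
  have h5 : 0 < t ^ 2 := by positivity
  nlinarith

lemma max_principle {Y u : ℂ → ℝ} {s N : ℝ} (hs : 0 < s) (hN : 0 ≤ N)
    (hY : ContinuousOn Y (closedBall 0 s))
    (hu : ∀ z ∈ ball (0:ℂ) s, ContinuousAt u z)
    (hsub : ∀ z0 ∈ ball (0:ℂ) s, ∀ k > 0, ∀ᶠ t in 𝓝[>] (0:ℝ),
      u z0 - k * t ^ 2 ≤ Real.circleAverage u z0 t)
    (htouch : ∀ z0 ∈ ball (0:ℂ) s, 0 < Y z0 → ∃ (C : ℝ) (G : ℂ → ℂ), 0 ≤ C ∧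
      (∀ᶠ z in 𝓝 z0, DifferentiableAt ℂ G z) ∧
      Y z0 ≤ Real.exp (C * u z0 + (G z0).re) ∧
      ∀ᶠ z in 𝓝 z0, Real.exp (C * u z + (G z).re) ≤ Y z)
    (hbd : ∀ z ∈ sphere (0:ℂ) s, Y z ≤ N) : Y 0 ≤ N := by
  by_contra! hlt
  obtain ⟨κ, hκ, hκN⟩ : ∃ κ > 0, N * Real.exp (κ * s ^ 2) < Y 0 := by
    have hc : ContinuousAt (fun κ : ℝ => N * Real.exp (κ * s ^ 2)) 0 := by fun_prop
    have h1 : ∀ᶠ κ in 𝓝 (0:ℝ), N * Real.exp (κ * s ^ 2) < Y 0 :=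
      hc.eventually_lt continuousAt_const (by simpa using hlt)
    have h2 : ∀ᶠ κ in 𝓝[>] (0:ℝ), N * Real.exp (κ * s ^ 2) < Y 0 := nhdsWithin_le_nhds h1
    obtain ⟨κ, h, h'⟩ := (h2.and self_mem_nhdsWithin).exists
    exact ⟨κ, h', h⟩
  have hcont : ContinuousOn (fun z => Y z * Real.exp (κ * ‖z‖ ^ 2)) (closedBall 0 s) :=
    hY.mul (by fun_prop)
  obtain ⟨z0, hz0, hm⟩ := (isCompact_closedBall (0:ℂ) s).exists_isMaxOn
    ⟨0, by simp [hs.le]⟩ hcont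
  have hm0 : Y 0 ≤ Y z0 * Real.exp (κ * ‖z0‖ ^ 2) := by
    have := hm (mem_closedBall_self hs.le)
    simpa using this
  have hz0b : z0 ∈ ball (0:ℂ) s := by
    rcases lt_or_eq_of_le (mem_closedBall.1 hz0) with h | h
    · exact h
    · exfalso
      have h1 := hbd z0 h
      have h2 : ‖z0‖ = s := by simpa using h
      rw [h2] at hm0
      have := mul_le_mul_of_nonneg_right h1 (Real.exp_pos (κ * s ^ 2)).le
      linarith
  have hYpos : 0 < Y z0 := by
    by_contra! h
    have := mul_nonpos_of_nonpos_of_nonneg h (Real.exp_pos (κ * ‖z0‖ ^ 2)).le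
    linarith
  obtain ⟨C, G, hC, hG, h0, hn⟩ := htouch z0 hz0b hYpos
  have hball : ∀ᶠ z in 𝓝 z0, z ∈ ball (0:ℂ) s := isOpen_ball.mem_nhds hz0b
  refine avg_contra (u := u) (z0 := z0) (C := C) (κ := κ)
    (G := fun z => G z + (κ : ℂ) * ((‖z0‖ ^ 2 : ℝ) + 2 * (starRingEnd ℂ) z0 * (z - z0))) hC hκ
    (hball.mono fun z hz => hu z hz) ?_ (hsub z0 hz0b) ?_
  · filter_upwards [hG] with z hz
    fun_prop
  · filter_upwards [hn, hball] with z hz hzb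
    have h1 : Y z * Real.exp (κ * ‖z‖ ^ 2) ≤ Y z0 * Real.exp (κ * ‖z0‖ ^ 2) :=
      hm (ball_subset_closedBall hzb)
    have h2 : Real.exp (C * u z + (G z).re + κ * ‖z‖ ^ 2)
        ≤ Real.exp (C * u z0 + (G z0).re + κ * ‖z0‖ ^ 2) := by
      rw [Real.exp_add, Real.exp_add (C * u z0 + (G z0).re)]
      calc _ ≤ Y z * Real.exp (κ * ‖z‖ ^ 2) := by gcongr
        _ ≤ _ := h1
        _ ≤ _ := by gcongr
    rw [Real.exp_le_exp] at h2
    have h3 : ‖z‖ ^ 2 = ‖z0‖ ^ 2 + 2 * ((starRingEnd ℂ) z0 * (z - z0)).re + ‖z - z0‖ ^ 2 := by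
      simp only [← Complex.normSq_eq_norm_sq, Complex.normSq_apply, Complex.mul_re,
        Complex.conj_re, Complex.conj_im, Complex.sub_re, Complex.sub_im]
      ring
    have h4 : ∀ w : ℂ, ((κ : ℂ) * ((‖z0‖ ^ 2 : ℝ) + 2 * (starRingEnd ℂ) z0 * w)).re
        = κ * (‖z0‖ ^ 2 + 2 * ((starRingEnd ℂ) z0 * w).re) := by
      intro w
      rw [Complex.re_ofReal_mul, Complex.add_re, Complex.ofReal_re, mul_assoc]
      congr 2
      simp
    rw [Complex.add_re, Complex.add_re, h4, h4, sub_self, mul_zero, Complex.zero_re]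
    rw [h3] at h2
    linarith

lemma comp_submean {E : Type*} [NormedAddCommGroup E] [NormedSpace ℂ E] [CompleteSpace E]
    {ψ : E → ℝ} (hψ : ContDiff ℝ 1 ψ) {f : ℂ → E} {z0 : ℂ}
    (hf : ∀ᶠ z in 𝓝 z0, DifferentiableAt ℂ f z)
    (hsub : ∀ A : E, ∀ᶠ t in 𝓝[>] (0:ℝ),
      ψ (f z0) ≤ Real.circleAverage (fun z => ψ (f z0 + (z - z0) • A)) z0 t)
    (k : ℝ) (hk : 0 < k) :
    ∀ᶠ t in 𝓝[>] (0:ℝ), ψ (f z0) - k * t ^ 2 ≤ Real.circleAverage (fun z => ψ (f z)) z0 t := by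
  set A := deriv f z0 with hA
  set D := fderiv ℝ ψ (f z0) with hD
  set R : ℂ → E := fun z => f z - (f z0 + (z - z0) • A) with hR
  have hstrict : HasStrictFDerivAt ψ D (f z0) :=
    (hψ.contDiffAt).hasStrictFDerivAt (by norm_num)
  have han : AnalyticAt ℂ f z0 := by
    rw [Complex.analyticAt_iff_eventually_differentiableAt]; exact hf
  have hRO : R =O[𝓝 z0] fun z => ‖z - z0‖ ^ 2 := by
    have hd1 : ∀ᶠ z in 𝓝 z0, DifferentiableAt ℂ (dslope f z0) z := by
      obtain ⟨ε, hε, hball⟩ := Metric.eventually_nhds_iff_ball.1 hf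
      have hm : ball z0 ε ∈ 𝓝 z0 := ball_mem_nhds _ hε
      have h1 : DifferentiableOn ℂ (dslope f z0) (ball z0 ε) :=
        (Complex.differentiableOn_dslope hm).2 fun z hz => (hball z hz).differentiableWithinAt
      filter_upwards [hm] with z hz
      exact h1.differentiableAt (isOpen_ball.mem_nhds hz)
    have hc : ContinuousAt (dslope (dslope f z0) z0) z0 :=
      continuousAt_dslope_same.2 hd1.self_of_nhds
    have hO : (dslope (dslope f z0) z0) =O[𝓝 z0] fun _ => (1:ℝ) := hc.tendsto.isBigO_one ℝ
    have hO2 : (fun z : ℂ => (z - z0) ^ 2) =O[𝓝 z0] fun z => ‖z - z0‖ ^ 2 :=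
      Asymptotics.isBigO_of_le _ fun z => by simp
    have h3 := hO2.smul hO
    refine h3.congr (fun z => ?_) (fun z => by simp)
    have e1 := sub_smul_dslope f z0 z
    have e2 := sub_smul_dslope (dslope f z0) z0 z
    rw [dslope_same] at e2
    rw [pow_two, mul_smul, e2, smul_sub, e1]
    simp only [R, hA]
    abel
  obtain ⟨K, hK⟩ := hRO.bound
  have hK1 : 0 < |K| + 1 := by positivity
  have ho := hstrict.isLittleO.def (c := k / (|K| + 1)) (by positivity)
  have htend : Tendsto (fun z => (f z, f z0 + (z - z0) • A)) (𝓝 z0) (𝓝 (f z0, f z0)) := by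
    have : ContinuousAt (fun z => (f z, f z0 + (z - z0) • A)) z0 := by
      have := hf.self_of_nhds.continuousAt
      fun_prop
    simpa [ContinuousAt] using this
  have hev := htend.eventually ho
  obtain ⟨ε, hε, hall⟩ := Metric.eventually_nhds_iff.1 (hf.and (hK.and hev))
  have h2 : ∀ᶠ t in 𝓝[>] (0:ℝ), t ∈ Ioo 0 ε := Ioo_mem_nhdsGT hε
  filter_upwards [hsub A, h2] with t ht ht2
  obtain ⟨ht0, htε⟩ := ht2
  have habs : |t| = t := abs_of_pos ht0
  have hmem : ∀ z ∈ closedBall z0 |t|, dist z z0 < ε := by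
    intro z hz
    rw [habs] at hz
    exact lt_of_le_of_lt (mem_closedBall.1 hz) htε
  have hRd : DiffContOnCl ℂ R (ball z0 |t|) := by
    apply DifferentiableOn.diffContOnCl
    rw [closure_ball _ (by simpa using ht0.ne')]
    intro z hz
    have := (hall (hmem z hz)).1
    apply DifferentiableAt.differentiableWithinAt
    fun_prop
  have hfc : ∀ z ∈ sphere z0 |t|, ContinuousAt f z := fun z hz =>
    (hall (hmem z (sphere_subset_closedBall hz))).1.continuousAt
  have hRi : CircleIntegrable R z0 t := by
    apply ContinuousOn.circleIntegrable'
    intro z hz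
    have := hfc z hz
    apply ContinuousAt.continuousWithinAt
    fun_prop
  have hDRi : CircleIntegrable (D ∘ R) z0 t := by
    apply ContinuousOn.circleIntegrable'
    intro z hz
    have := hfc z hz
    apply ContinuousAt.continuousWithinAt
    have h1 : ContinuousAt R z := by fun_prop
    exact D.continuous.continuousAt.comp h1
  have hDav : Real.circleAverage (D ∘ R) z0 t = 0 := by
    rw [ContinuousLinearMap.circleAverage_comp_comm _ hRi, hRd.circleAverage]; simp [R]
  have hψc := hψ.continuous
  have hli : CircleIntegrable (fun z => ψ (f z0 + (z - z0) • A)) z0 t := by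
    apply ContinuousOn.circleIntegrable'
    fun_prop
  have hfi : CircleIntegrable (fun z => ψ (f z)) z0 t := by
    apply ContinuousOn.circleIntegrable'
    intro z hz
    exact (hψc.continuousAt.comp (hfc z hz)).continuousWithinAt
  have hci : CircleIntegrable (fun _ : ℂ => k * t ^ 2) z0 t := by
    apply ContinuousOn.circleIntegrable'
    fun_prop
  have key : Real.circleAverage ((fun z => ψ (f z0 + (z - z0) • A)) + D ∘ R) z0 t ≤
      Real.circleAverage ((fun z => ψ (f z)) + fun _ : ℂ => k * t ^ 2) z0 t := by
    apply Real.circleAverage_mono (hli.add hDRi) (hfi.add hci)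
    intro z hz
    obtain ⟨-, hb1, hb2⟩ := hall (hmem z (sphere_subset_closedBall hz))
    have hz' : ‖z - z0‖ = t := by rw [← habs]; simpa using hz
    rw [hz'] at hb1
    have h5 : ‖R z‖ ≤ (|K| + 1) * t ^ 2 := by
      refine hb1.trans ?_
      rw [Real.norm_of_nonneg (by positivity)]
      gcongr
      linarith [le_abs_self K]
    have h6 : k / (|K| + 1) * ‖R z‖ ≤ k * t ^ 2 := by
      calc _ ≤ k / (|K| + 1) * ((|K| + 1) * t ^ 2) := by gcongr
        _ = _ := by field_simp
    have h7 := (abs_le.1 ((Real.norm_eq_abs _).symm.le.trans hb2)).1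
    simp only [Pi.add_apply, Function.comp_apply]
    change -(k / (|K| + 1) * ‖R z‖) ≤ ψ (f z) - ψ (f z0 + (z - z0) • A) - D (R z) at h7
    linarith
  rw [Real.circleAverage_add hli hDRi, Real.circleAverage_add hfi hci, hDav,
    Real.circleAverage_const] at key
  linarith

lemma smoothing {E : Type*} [NormedAddCommGroup E] [NormedSpace ℂ E] [FiniteDimensional ℂ E]
    {Ω : Set E} (hopen : IsOpen Ω) {φ : E → ℝ} (hcont : ContinuousOn φ Ω) {M : ℝ}
    (hM : ∀ z ∈ Ω, |φ z| ≤ M) (hpsh : PSHOn φ Ω) {K : Set E} (hK : IsCompact K) (hKΩ : K ⊆ Ω)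
    {ε : ℝ} (hε : 0 < ε) :
    ∃ ψ : E → ℝ, ContDiff ℝ 1 ψ ∧ (∀ x ∈ K, |ψ x - φ x| ≤ ε) ∧
      ∀ x ∈ K, ∀ A : E, ∀ z0 : ℂ, ∀ᶠ t in 𝓝[>] (0:ℝ),
        ψ x ≤ Real.circleAverage (fun z => ψ (x + (z - z0) • A)) z0 t := by
  let _ : MeasurableSpace E := borel E
  have : BorelSpace E := ⟨rfl⟩
  have : FiniteDimensional ℝ E := FiniteDimensional.complexToReal E
  have : ProperSpace E := FiniteDimensional.proper ℝ E
  let μ : Measure E := Measure.addHaar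
  obtain ⟨δ1, hδ1, hsub1⟩ := hK.exists_cthickening_subset_open hopen hKΩ
  have hKc : IsCompact (cthickening δ1 K) := hK.cthickening
  have hunif := hKc.uniformContinuousOn_of_continuous (hcont.mono hsub1)
  obtain ⟨δ2, hδ2, hclose⟩ := Metric.uniformContinuousOn_iff_le.1 hunif ε hε
  set δ := min (δ1 / 2) δ2 with hδdef
  have hδ : 0 < δ := by positivity
  let b : ContDiffBump (0 : E) := ⟨δ / 2, δ, by positivity, by linarith⟩
  set g : E → ℝ := Ω.indicator φ with hg
  have hgm : Measurable g := by
    classical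
    have := hcont.measurable_piecewise (g := fun _ => (0:ℝ)) continuousOn_const
      hopen.measurableSet
    rw [hg, ← Set.piecewise_eq_indicator]
    exact this
  have hgb : ∀ x, |g x| ≤ |M| := by
    intro x
    by_cases hx : x ∈ Ω
    · simp only [hg, indicator_of_mem hx]; exact (hM x hx).trans (le_abs_self M)
    · simp [hg, indicator_of_notMem hx]
  have hgL : LocallyIntegrable g μ := by
    apply (locallyIntegrable_const |M|).mono hgm.aestronglyMeasurable
    filter_upwards with x
    simpa using hgb x
  set ρ : E → ℝ := b.normed μ with hρ
  have hρc : Continuous ρ := b.continuous_normed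
  have hρi : Integrable ρ μ := b.integrable_normed
  set ψ : E → ℝ := convolution ρ g (ContinuousLinearMap.lsmul ℝ ℝ) μ with hψ
  have hψe : ∀ x, ψ x = ∫ t, ρ t * g (x - t) ∂μ := by
    intro x; simp [hψ, convolution]
  have hcd : ContDiff ℝ 1 ψ :=
    HasCompactSupport.contDiff_convolution_left (n := 1) _ b.hasCompactSupport_normed
      b.contDiff_normed hgL
  refine ⟨ψ, hcd, ?_, ?_⟩
  · intro x hx
    have hxΩ := hKΩ hx
    have h1 : dist (ψ x) (g x) ≤ ε := by
      apply b.dist_normed_convolution_le hgm.aestronglyMeasurable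
      intro y hy
      have hyb : dist y x < δ := hy
      have hyK : y ∈ cthickening δ1 K := by
        apply mem_cthickening_of_dist_le y x δ1 K hx
        have : δ ≤ δ1 / 2 := min_le_left _ _
        linarith
      have hxK : x ∈ cthickening δ1 K := self_subset_cthickening K hx
      rw [hg, indicator_of_mem (hsub1 hyK), indicator_of_mem hxΩ]
      exact hclose y hyK x hxK (hyb.le.trans (min_le_right _ _))
    rw [hg, indicator_of_mem hxΩ] at h1
    exact h1
  · intro x hx A z0
    have hev : ∀ᶠ t in 𝓝[>] (0:ℝ), t ∈ Ioo 0 (δ1 / 2 / (‖A‖ + 1)) :=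
      Ioo_mem_nhdsGT (by positivity)
    filter_upwards [hev] with t ht
    obtain ⟨ht0, ht1⟩ := ht
    have htA : t * ‖A‖ ≤ δ1 / 2 := by
      rw [lt_div_iff₀ (by positivity)] at ht1
      nlinarith
    have hball : ∀ y, ‖y‖ < δ → ∀ w : ℂ, ‖w‖ ≤ t → x - y + w • A ∈ Ω := by
      intro y hy w hw
      apply hsub1
      apply mem_cthickening_of_dist_le _ x δ1 K hx
      have : δ ≤ δ1 / 2 := min_le_left _ _
      have h3 : ‖w • A‖ ≤ δ1 / 2 := by
        rw [norm_smul]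
        exact (mul_le_mul_of_nonneg_right hw (norm_nonneg A)).trans htA
      rw [dist_eq_norm, show x - y + w • A - x = w • A - y by abel]
      have := norm_sub_le (w • A) y
      linarith
    let F : ℝ → E → ℝ := fun θ y => ρ y * g (x + (circleMap z0 t θ - z0) • A - y)
    have hFm : Measurable (Function.uncurry F) := by
      apply Measurable.mul
      · exact hρc.measurable.comp measurable_snd
      · apply hgm.comp
        apply Continuous.measurable
        fun_prop
    have hFi : Integrable (Function.uncurry F)
        ((volume.restrict (Set.uIoc 0 (2 * Real.pi))).prod μ) := by
      have : IsFiniteMeasure (volume.restrict (Set.uIoc 0 (2 * Real.pi))) :=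
        ⟨by simp [Set.uIoc]⟩
      have h1 : Integrable (fun p : ℝ × E => (|M| : ℝ) * ρ p.2)
          ((volume.restrict (Set.uIoc 0 (2 * Real.pi))).prod μ) :=
        (hρi.comp_snd _).const_mul _
      apply h1.mono hFm.aestronglyMeasurable
      filter_upwards with p
      simp only [Function.uncurry, F, norm_mul, Real.norm_eq_abs, abs_abs]
      rw [mul_comm]
      exact mul_le_mul_of_nonneg_right (hgb _) (abs_nonneg _)
    have hswap := intervalIntegral_integral_swap hFi
    have hR : Real.circleAverage (fun z => ψ (x + (z - z0) • A)) z0 t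
        = ∫ y, (2 * Real.pi)⁻¹ * (∫ θ in (0:ℝ)..(2 * Real.pi), F θ y) ∂μ := by
      rw [integral_const_mul, ← hswap, Real.circleAverage, smul_eq_mul]
      simp only [hψe, F]
    rw [hR, hψe]
    apply integral_mono
    · apply (hρi.mul_const |M|).mono
      · exact (hρc.measurable.mul (hgm.comp (measurable_const.sub measurable_id))).aestronglyMeasurable
      · filter_upwards with y
        simp only [norm_mul, Real.norm_eq_abs, abs_abs]
        exact mul_le_mul_of_nonneg_left (hgb _) (abs_nonneg _)
    · apply Integrable.const_mul
      have := hFi.integral_prod_right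
      simpa [intervalIntegral.integral_of_le Real.two_pi_pos.le,
        Set.uIoc_of_le Real.two_pi_pos.le] using this
    · intro y
      by_cases hy : ‖y‖ < δ
      · have h1 := hpsh.2 (x - y) A 0 t ht0 (by
          intro w hw
          exact hball y hy w (by simpa using hw))
        have e0 : ∀ w : ℂ, ‖w‖ ≤ t → g (x + w • A - y) = φ (x - y + w • A) := by
          intro w hw
          rw [show x + w • A - y = x - y + w • A by abel, hg,
            indicator_of_mem (hball y hy w hw)]
        have e1 : ∀ θ : ℝ, F θ y
            = ρ y * φ (x - y + ((0:ℂ) + (t:ℂ) * Complex.exp ((θ:ℂ) * Complex.I)) • A) := by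
          intro θ
          simp only [F]
          rw [circleMap_sub_center, e0 _ (by simp [abs_of_pos ht0])]
          rfl
        simp only [e1]
        rw [intervalIntegral.integral_const_mul, ← mul_assoc, mul_comm _ (ρ y), mul_assoc]
        have e2 : g (x - y) = φ (x - y + (0:ℂ) • A) := by
          have := e0 0 (by simpa using ht0.le)
          simpa using this
        change ρ y * g (x - y) ≤ _
        rw [e2]
        exact mul_le_mul_of_nonneg_left h1 (b.nonneg_normed y)
      · have : ρ y = 0 := by
          have h1 : y ∉ Function.support ρ := by
            rw [hρ, b.support_normed_eq]
            simpa using hy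
          simpa using h1
        simp [F, this]

lemma log_touch {h : ℂ → ℂ} {z0 : ℂ} (hd : ∀ᶠ z in 𝓝 z0, DifferentiableAt ℂ h z)
    (h0 : h z0 ≠ 0) : ∃ G : ℂ → ℂ, (∀ᶠ z in 𝓝 z0, DifferentiableAt ℂ G z) ∧
      ∀ᶠ z in 𝓝 z0, Real.exp (G z).re = ‖h z‖ := by
  have hc : ContinuousAt (fun z => h z / h z0) z0 :=
    hd.self_of_nhds.continuousAt.div_const _
  have hs : ∀ᶠ z in 𝓝 z0, h z / h z0 ∈ Complex.slitPlane := by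
    apply hc.eventually_mem
    rw [div_self h0]
    exact Complex.isOpen_slitPlane.mem_nhds Complex.one_mem_slitPlane
  refine ⟨fun z => Complex.log (h z / h z0) + (Real.log ‖h z0‖ : ℝ), ?_, ?_⟩
  · filter_upwards [hd, hs] with z hz hz2
    exact ((hz.div_const _).clog hz2).add_const _
  · filter_upwards [hs] with z hz
    have hne : h z / h z0 ≠ 0 := Complex.slitPlane_ne_zero hz
    have h0' : 0 < ‖h z0‖ := norm_pos_iff.2 h0
    rw [Complex.add_re, Complex.log_re, Complex.ofReal_re, Real.exp_add,
      Real.exp_log (norm_pos_iff.2 hne), Real.exp_log h0', norm_div]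
    field_simp

lemma disc_estimate {E : Type*} [NormedAddCommGroup E] [InnerProductSpace ℂ E] [CompleteSpace E]
    {f : ℂ → E} {u : ℂ → ℝ} {r s ρ a L M : ℝ} (hs : 0 < s) (hsr : s < r) (hρ : 0 < ρ)
    (ha : 0 < a) (hL : 2 ≤ L) (hf : DifferentiableOn ℂ f (ball 0 r))
    (hu : ∀ z ∈ ball (0:ℂ) r, ContinuousAt u z)
    (hsub : ∀ z0 ∈ ball (0:ℂ) s, ∀ k > 0, ∀ᶠ t in 𝓝[>] (0:ℝ),
      u z0 - k * t ^ 2 ≤ Real.circleAverage u z0 t)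
    (hin : ∀ z ∈ closedBall (0:ℂ) s, ‖f z - f 0‖ ≤ ρ → 2 * a < u z)
    (hout : ∀ z ∈ closedBall (0:ℂ) s, ρ * (L - 1) ≤ ‖f z - f 0‖ → u z < a)
    (hM : ∀ z ∈ closedBall (0:ℂ) s, u z ≤ M) :
    ‖deriv f 0‖ * s ≤ ρ * Real.exp (2 * L ^ 2 / a * M + L ^ 2) := by
  have hr : 0 < r := hs.trans hsr
  have hsb : closedBall (0:ℂ) s ⊆ ball 0 r := closedBall_subset_ball hsr
  set C := 2 * L ^ 2 / a with hCdef
  have hC : 0 < C := by positivity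
  have hCa : C * a = 2 * L ^ 2 := by rw [hCdef]; field_simp
  set h : ℂ → E := dslope f 0 with hh
  have hhd : DifferentiableOn ℂ h (ball 0 r) :=
    (Complex.differentiableOn_dslope (ball_mem_nhds _ hr)).2 hf
  set e : ℂ → ℝ := fun z => ‖f z - f 0‖ / ρ with he
  have hzh : ∀ z, ‖z‖ * ‖h z‖ = ρ * e z := by
    intro z
    have := sub_smul_dslope f 0 z
    rw [sub_zero] at this
    rw [← norm_smul, hh, this]
    simp only [he]; field_simp
  have he0 : e 0 = 0 := by simp [he]
  have hein : ∀ z ∈ closedBall (0:ℂ) s, e z ≤ 1 → 2 * a < u z := by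
    intro z hz h1
    apply hin z hz
    simp only [he] at h1
    rwa [div_le_one hρ] at h1
  have heout : ∀ z ∈ closedBall (0:ℂ) s, L - 1 ≤ e z → u z < a := by
    intro z hz h1
    apply hout z hz
    simp only [he] at h1
    rw [le_div_iff₀ hρ] at h1
    linarith
  have hfc : ∀ z ∈ ball (0:ℂ) r, ContinuousAt f z := fun z hz =>
    hf.continuousOn.continuousAt (isOpen_ball.mem_nhds hz)
  have hhc : ∀ z ∈ ball (0:ℂ) r, ContinuousAt h z := fun z hz =>
    hhd.continuousOn.continuousAt (isOpen_ball.mem_nhds hz)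
  have hec : ∀ z ∈ ball (0:ℂ) r, ContinuousAt e z := by
    intro z hz
    have := hfc z hz
    simp only [he]
    fun_prop
  set P : ℂ → ℝ := fun z => Real.exp (C * u z) * (‖h z‖ / ρ) with hP
  set Q : ℂ → ℝ := fun z => Real.exp (C * u z + (e z ^ 2 - 2)) / ‖z‖ with hQ
  set S : ℂ → ℝ := fun z => Real.exp (3 * L ^ 2) / ‖z‖ with hS
  have hPc : ∀ z ∈ ball (0:ℂ) r, ContinuousAt P z := by
    intro z hz
    have h1 := hu z hz
    have h2 := hhc z hz
    simp only [hP]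
    fun_prop
  have hQc : ∀ z ∈ ball (0:ℂ) r, z ≠ 0 → ContinuousAt Q z := by
    intro z hz hz0
    have h1 := hu z hz
    have h2 := hec z hz
    have h3 : ‖z‖ ≠ 0 := by simpa using hz0
    simp only [hQ]
    apply ContinuousAt.div _ (by fun_prop) h3
    fun_prop
  have hSc : ∀ z ∈ ball (0:ℂ) r, z ≠ 0 → ContinuousAt S z := by
    intro z hz hz0
    have h3 : ‖z‖ ≠ 0 := by simpa using hz0
    simp only [hS]
    exact ContinuousAt.div (by fun_prop) (by fun_prop) h3
  have hPe : ∀ z, z ≠ 0 → P z = Real.exp (C * u z) * e z / ‖z‖ := by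
    intro z hz
    have h3 : ‖z‖ ≠ 0 := by simpa using hz
    have := hzh z
    have h4 : ‖h z‖ = ρ * e z / ‖z‖ := by field_simp; linarith
    simp only [hP]
    rw [h4]; field_simp
  have hne : ∀ z, 1 ≤ e z → z ≠ 0 := by
    rintro z hz rfl
    rw [he0] at hz; linarith
  -- at `e = 1`, `P` dominates
  have hone : ∀ z ∈ closedBall (0:ℂ) s, e z = 1 → Q z < P z ∧ S z < P z := by
    intro z hz h1
    have hz0 := hne z h1.ge
    have h3 : 0 < ‖z‖ := by simpa using hz0
    have h4 := hein z hz h1.le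
    rw [hPe z hz0, h1, mul_one]
    simp only [hQ, hS]
    constructor
    · apply div_lt_div_of_pos_right _ h3
      rw [Real.exp_lt_exp, h1]; linarith
    · apply div_lt_div_of_pos_right _ h3
      rw [Real.exp_lt_exp]
      have : C * (2 * a) < C * u z := mul_lt_mul_of_pos_left h4 hC
      nlinarith
  have hLexp : L ≤ Real.exp (L ^ 2) := by
    have := Real.add_one_le_exp (L ^ 2)
    nlinarith
  have hLout : ∀ z ∈ closedBall (0:ℂ) s, e z = L → P z < S z ∧ Q z < S z := by
    intro z hz h1
    have hz0 := hne z (by linarith)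
    have h3 : 0 < ‖z‖ := by simpa using hz0
    have h4 := heout z hz (by linarith)
    have h5 : C * u z < 2 * L ^ 2 := by rw [← hCa]; exact mul_lt_mul_of_pos_left h4 hC
    rw [hPe z hz0, h1]
    simp only [hQ, hS]
    constructor
    · apply div_lt_div_of_pos_right _ h3
      calc Real.exp (C * u z) * L < Real.exp (2 * L ^ 2) * L := by
            apply mul_lt_mul_of_pos_right _ (by linarith)
            rwa [Real.exp_lt_exp]
        _ ≤ Real.exp (2 * L ^ 2) * Real.exp (L ^ 2) := by gcongr
        _ = Real.exp (3 * L ^ 2) := by rw [← Real.exp_add]; ring_nf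
    · apply div_lt_div_of_pos_right _ h3
      rw [Real.exp_lt_exp, h1]; linarith
  set Y : ℂ → ℝ := fun z => if e z < 1 then P z else if e z < L then max (max (P z) (Q z)) (S z)
    else S z with hY
  have hYc : ContinuousOn Y (closedBall 0 s) := by
    intro z hz
    apply ContinuousAt.continuousWithinAt
    have hzr := hsb hz
    have hez := hec z hzr
    rcases lt_trichotomy (e z) 1 with h1 | h1 | h1
    · apply (hPc z hzr).congr
      filter_upwards [hez.eventually_lt continuousAt_const h1] with w hw
      simp [hY, hw]
    · have hz0 := hne z h1.ge
      apply (hPc z hzr).congr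
      filter_upwards [(hQc z hzr hz0).eventually_lt (hPc z hzr) (hone z hz h1).1,
        (hSc z hzr hz0).eventually_lt (hPc z hzr) (hone z hz h1).2,
        hez.eventually_lt continuousAt_const (show e z < L by linarith)] with w hw1 hw2 hw3
      simp only [hY, hw3, if_true, max_eq_left hw1.le, max_eq_left hw2.le, ite_self]
    · have hz0 := hne z h1.le
      have hgt := continuousAt_const.eventually_lt hez h1
      rcases lt_trichotomy (e z) L with h2 | h2 | h2
      · have hmx : ContinuousAt (fun w => max (max (P w) (Q w)) (S w)) z :=
          Filter.Tendsto.max (Filter.Tendsto.max (hPc z hzr) (hQc z hzr hz0)) (hSc z hzr hz0)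
        apply hmx.congr
        filter_upwards [hgt, hez.eventually_lt continuousAt_const h2] with w hw hw2
        simp [hY, hw.not_gt, hw2]
      · apply (hSc z hzr hz0).congr
        filter_upwards [hgt, (hPc z hzr).eventually_lt (hSc z hzr hz0) (hLout z hz h2).1,
          (hQc z hzr hz0).eventually_lt (hSc z hzr hz0) (hLout z hz h2).2] with w hw hw1 hw2
        have : max (max (P w) (Q w)) (S w) = S w := max_eq_right (max_le hw1.le hw2.le)
        simp only [hY, hw.not_gt, if_false, this, ite_self]
      · apply (hSc z hzr hz0).congr
        filter_upwards [hgt, continuousAt_const.eventually_lt hez h2] with w hw hw2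
        simp [hY, hw.not_gt, hw2.not_gt]
  have hnear : ∀ z ∈ ball (0:ℂ) r, ∀ᶠ w in 𝓝 z, w ∈ ball (0:ℂ) r := fun z hz =>
    isOpen_ball.mem_nhds hz
  -- touching functions
  have hPt : ∀ z ∈ ball (0:ℂ) r, 0 < P z → ∃ G : ℂ → ℂ,
      (∀ᶠ w in 𝓝 z, DifferentiableAt ℂ G w) ∧ P z ≤ Real.exp (C * u z + (G z).re) ∧
      ∀ᶠ w in 𝓝 z, Real.exp (C * u w + (G w).re) ≤ P w := by
    intro z hz hpos
    have hhz : h z ≠ 0 := by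
      intro h0
      simp [hP, h0] at hpos
    obtain ⟨l, hl1, hl2⟩ := exists_dual_vector ℂ (h z) (by simpa using hhz)
    have hd : ∀ᶠ w in 𝓝 z, DifferentiableAt ℂ (fun w => l (h w) / (ρ:ℂ)) w := by
      filter_upwards [hnear z hz] with w hw
      have := hhd.differentiableAt (isOpen_ball.mem_nhds hw)
      exact (l.differentiableAt.comp w this).div_const _
    obtain ⟨G, hG, hGe⟩ := log_touch hd (by
      rw [hl2]
      have : (ρ:ℂ) ≠ 0 := by exact_mod_cast hρ.ne'
      simpa [this] using hhz)
    refine ⟨G, hG, ?_, ?_⟩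
    · rw [Real.exp_add, hGe.self_of_nhds, hl2]
      simp [hP, abs_of_pos hρ]
    · filter_upwards [hGe] with w hw
      rw [Real.exp_add, hw, norm_div]
      have h1 : ‖l (h w)‖ ≤ ‖h w‖ := by
        have := l.le_opNorm (h w)
        rwa [hl1, one_mul] at this
      simp only [hP, Complex.norm_real, Real.norm_eq_abs, abs_of_pos hρ]
      gcongr
  have hinvt : ∀ z : ℂ, z ≠ 0 → ∃ G : ℂ → ℂ,
      (∀ᶠ w in 𝓝 z, DifferentiableAt ℂ G w) ∧ ∀ᶠ w in 𝓝 z, Real.exp (G w).re = ‖w⁻¹‖ := by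
    intro z hz
    apply log_touch (h := fun w => w⁻¹) _ (inv_ne_zero hz)
    filter_upwards [isOpen_ne.mem_nhds hz] with w hw
    exact differentiableAt_inv hw
  have hQt : ∀ z ∈ ball (0:ℂ) r, z ≠ 0 → ∃ G : ℂ → ℂ,
      (∀ᶠ w in 𝓝 z, DifferentiableAt ℂ G w) ∧ Q z ≤ Real.exp (C * u z + (G z).re) ∧
      ∀ᶠ w in 𝓝 z, Real.exp (C * u w + (G w).re) ≤ Q w := by
    intro z hz hz0
    obtain ⟨G, hG, hGe⟩ := hinvt z hz0
    set F0 := f z - f 0 with hF0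
    refine ⟨fun w => G w + (((‖F0‖ ^ 2 : ℝ) : ℂ) + 2 * innerSL ℂ F0 (f w - f z)) / ((ρ ^ 2 : ℝ) : ℂ)
      - 2, ?_, ?_, ?_⟩
    · filter_upwards [hG, hnear z hz] with w hw hwr
      have h1 := hf.differentiableAt (isOpen_ball.mem_nhds hwr)
      have h2 : DifferentiableAt ℂ (fun w => innerSL ℂ F0 (f w - f z)) w :=
        (innerSL ℂ F0).differentiableAt.comp w (h1.sub_const _)
      fun_prop
    · have h1 : (((((‖F0‖ ^ 2 : ℝ) : ℂ) + 2 * innerSL ℂ F0 (f z - f z)) / ((ρ ^ 2 : ℝ) : ℂ))).re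
          = e z ^ 2 := by
        rw [Complex.div_ofReal_re, sub_self, map_zero, mul_zero, add_zero, Complex.ofReal_re]
        simp only [he]; rw [div_pow]
      rw [Complex.sub_re, Complex.add_re, h1]
      have h2 := hGe.self_of_nhds
      have h3 : C * u z + ((G z).re + e z ^ 2 - (2:ℂ).re)
          = (C * u z + (e z ^ 2 - 2)) + (G z).re := by simp; ring
      rw [h3, Real.exp_add, h2]
      simp only [hQ]
      rw [norm_inv, div_eq_mul_inv]
    · filter_upwards [hGe] with w hw
      have h1 : (((((‖F0‖ ^ 2 : ℝ) : ℂ) + 2 * innerSL ℂ F0 (f w - f z)) / ((ρ ^ 2 : ℝ) : ℂ))).re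
          ≤ e w ^ 2 := by
        rw [Complex.div_ofReal_re, Complex.add_re, Complex.ofReal_re]
        simp only [he]; rw [div_pow]
        gcongr
        have h4 := norm_add_sq (𝕜 := ℂ) F0 (f w - f z)
        rw [show F0 + (f w - f z) = f w - f 0 by rw [hF0]; abel] at h4
        rw [h4]
        have : (2 * innerSL ℂ F0 (f w - f z)).re = 2 * RCLike.re (inner ℂ F0 (f w - f z)) := by
          rw [innerSL_apply_apply]; simp [inner_sub_right]
        rw [this]
        nlinarith [sq_nonneg ‖f w - f z‖]
      rw [Complex.sub_re, Complex.add_re]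
      have hQw : Q w = Real.exp (C * u w + (e w ^ 2 - 2) + (G w).re) := by
        rw [Real.exp_add, hw, norm_inv]
        simp only [hQ]
        rw [div_eq_mul_inv]
      rw [hQw, Real.exp_le_exp]
      have : (2:ℂ).re = 2 := by simp
      linarith
  have hmain : Y 0 ≤ Real.exp (C * M + L ^ 2) / s := by
    apply max_principle hs (by positivity) hYc
      (fun z hz => hu z (hsb (ball_subset_closedBall hz))) hsub
    · intro z hz hpos
      have hzc := ball_subset_closedBall hz
      have hzr := hsb hzc
      have hez := hec z hzr
      have hcaseP : e z < L → Y z = P z → ∃ (C : ℝ) (G : ℂ → ℂ), 0 ≤ C ∧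
          (∀ᶠ z in 𝓝 z, DifferentiableAt ℂ G z) ∧
          Y z ≤ Real.exp (C * u z + (G z).re) ∧
          ∀ᶠ z in 𝓝 z, Real.exp (C * u z + (G z).re) ≤ Y z := by
        intro h1 h2
        obtain ⟨G, g1, g2, g3⟩ := hPt z hzr (h2 ▸ hpos)
        refine ⟨C, G, hC.le, g1, h2 ▸ g2, ?_⟩
        filter_upwards [g3, hez.eventually_lt continuousAt_const h1] with w hw hw2
        refine hw.trans ?_
        simp only [hY, hw2, if_true]
        split_ifs
        · exact le_rfl
        · exact (le_max_left _ _).trans (le_max_left _ _)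
      have hcaseS : 1 < e z → Y z = S z → ∃ (C : ℝ) (G : ℂ → ℂ), 0 ≤ C ∧
          (∀ᶠ z in 𝓝 z, DifferentiableAt ℂ G z) ∧
          Y z ≤ Real.exp (C * u z + (G z).re) ∧
          ∀ᶠ z in 𝓝 z, Real.exp (C * u z + (G z).re) ≤ Y z := by
        intro h1 h2
        obtain ⟨G, g1, g2⟩ := hinvt z (hne z h1.le)
        have e1 : ∀ w, Real.exp (G w).re = ‖w⁻¹‖ →
            Real.exp (0 * u w + (G w + ((3 * L ^ 2 : ℝ) : ℂ)).re) = S w := by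
          intro w hw
          rw [zero_mul, zero_add, Complex.add_re, Real.exp_add, hw, Complex.ofReal_re]
          simp only [hS]
          rw [norm_inv, div_eq_mul_inv, mul_comm]
        refine ⟨0, fun w => G w + ((3 * L ^ 2 : ℝ) : ℂ), le_rfl, ?_, ?_, ?_⟩
        · filter_upwards [g1] with w hw
          exact hw.add_const _
        · rw [e1 z g2.self_of_nhds, h2]
        · filter_upwards [g2, continuousAt_const.eventually_lt hez h1] with w hw hw2
          rw [e1 w hw]
          simp only [hY, hw2.not_gt, if_false]
          split_ifs
          · exact le_max_right _ _
          · exact le_rfl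
      have hcaseQ : 1 < e z → e z < L → Y z = Q z → ∃ (C : ℝ) (G : ℂ → ℂ), 0 ≤ C ∧
          (∀ᶠ z in 𝓝 z, DifferentiableAt ℂ G z) ∧
          Y z ≤ Real.exp (C * u z + (G z).re) ∧
          ∀ᶠ z in 𝓝 z, Real.exp (C * u z + (G z).re) ≤ Y z := by
        intro h1 hh1 h2
        obtain ⟨G, g1, g2, g3⟩ := hQt z hzr (hne z h1.le)
        refine ⟨C, G, hC.le, g1, h2 ▸ g2, ?_⟩
        filter_upwards [g3, hez.eventually_lt continuousAt_const hh1,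
          continuousAt_const.eventually_lt hez h1] with w hw hw2 hw3
        refine hw.trans ?_
        simp only [hY, hw2, hw3.not_gt, if_true, if_false]
        exact (le_max_right _ _).trans (le_max_left _ _)
      rcases lt_trichotomy (e z) 1 with h1 | h1 | h1
      · exact hcaseP (by linarith) (by simp [hY, h1])
      · have h2 : e z < L := by linarith
        apply hcaseP h2
        obtain ⟨o1, o2⟩ := hone z hzc h1
        simp only [hY, h2, if_true, max_eq_left o1.le, max_eq_left o2.le, ite_self]
      · by_cases h2 : e z < L
        · have hYm : Y z = max (max (P z) (Q z)) (S z) := by simp [hY, h1.not_gt, h2]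
          rcases max_choice (max (P z) (Q z)) (S z) with m | m
          · rcases max_choice (P z) (Q z) with mm | mm
            · exact hcaseP h2 (by rw [hYm, m, mm])
            · exact hcaseQ h1 h2 (by rw [hYm, m, mm])
          · exact hcaseS h1 (by rw [hYm, m])
        · exact hcaseS h1 (by simp [hY, h1.not_gt, h2])
    · intro z hz
      have hzc := sphere_subset_closedBall hz
      have hzn : ‖z‖ = s := by simpa using hz
      have hz0 : z ≠ 0 := by rintro rfl; simp at hzn; linarith
      have hMz : C * u z ≤ C * M := mul_le_mul_of_nonneg_left (hM z hzc) hC.le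
      have hen : 0 ≤ e z := by simp only [he]; positivity
      have bP : e z < L → P z ≤ Real.exp (C * M + L ^ 2) / s := by
        intro h1
        rw [hPe z hz0, hzn, Real.exp_add]
        gcongr
        linarith
      have bQ : e z < L → Q z ≤ Real.exp (C * M + L ^ 2) / s := by
        intro h1
        simp only [hQ]
        rw [hzn]
        gcongr
        nlinarith
      have bS : S z ≤ Real.exp (C * M + L ^ 2) / s := by
        simp only [hS]
        rw [hzn]
        gcongr
        have h0 : (0:ℂ) ∈ closedBall (0:ℂ) s := mem_closedBall_self hs.le
        have := hein 0 h0 (by rw [he0]; norm_num)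
        have h2 : C * (2 * a) ≤ C * M :=
          mul_le_mul_of_nonneg_left (this.le.trans (hM 0 h0)) hC.le
        nlinarith
      simp only [hY]
      split_ifs with c1 c2
      · exact bP (by linarith)
      · exact max_le (max_le (bP c2) (bQ c2)) bS
      · exact bS
  have hY0 : Y 0 = Real.exp (C * u 0) * (‖deriv f 0‖ / ρ) := by
    simp [hY, he0, hP, hh]
  have hu0 : 1 ≤ Real.exp (C * u 0) := by
    apply Real.one_le_exp
    have := hein 0 (mem_closedBall_self hs.le) (by rw [he0]; norm_num)
    have h2 : 0 < u 0 := by linarith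
    positivity
  have hfin : ‖deriv f 0‖ / ρ ≤ Real.exp (C * M + L ^ 2) / s := by
    refine le_trans ?_ (hY0 ▸ hmain)
    exact le_mul_of_one_le_left (by positivity) hu0
  rw [div_le_div_iff₀ hρ hs] at hfin
  linarith

/-- If an unbounded domain in ℂⁿ admits a strong antipeak function at infinity
(a bounded continuous positive plurisubharmonic function tending to 0 at infinity),
then it is Kobayashi hyperbolic. -/
theorem stmt_0 {n : ℕ} (Ω : Set (EuclideanSpace ℂ (Fin n)))
    (hopen : IsOpen Ω) (hconn : IsConnected Ω)
    (hunbounded : ¬ Bornology.IsBounded Ω)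
    (φ : EuclideanSpace ℂ (Fin n) → ℝ)
    (hbdd : ∃ M : ℝ, ∀ z ∈ Ω, φ z ≤ M)
    (hcont : ContinuousOn φ Ω)
    (hpos : ∀ z ∈ Ω, 0 < φ z)
    (hpsh : PSHOn φ Ω)
    (hanti : ∀ ε > 0, ∃ R : ℝ, ∀ z ∈ Ω, R ≤ ‖z‖ → φ z < ε) :
    KobayashiHyperbolic Ω := by
  obtain ⟨M, hM⟩ := hbdd
  intro p hp
  have hp0 := hpos p hp
  set a := φ p / 4 with ha_def
  have ha : 0 < a := by positivity
  have hcp : ContinuousAt φ p := hcont.continuousAt (hopen.mem_nhds hp)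
  obtain ⟨ρ2, hρ2, hφp⟩ := Metric.eventually_nhds_iff.1
    (continuousAt_const.eventually_lt hcp (show 3 * a < φ p by rw [ha_def]; linarith))
  set ρ := ρ2 / 2 with hρdef
  have hρ : 0 < ρ := by positivity
  obtain ⟨R, hR⟩ := hanti (a / 2) (by positivity)
  set L := 2 + (|R| + ‖p‖ + ρ) / ρ with hLdef
  have hL : 2 ≤ L := by
    have : 0 ≤ (|R| + ‖p‖ + ρ) / ρ := by positivity
    linarith
  have hLρ : ρ * (L - 1) = ρ + (|R| + ‖p‖ + ρ) := by
    rw [hLdef]; field_simp; ring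
  set B := ρ * Real.exp (2 * L ^ 2 / a * (M + a / 2) + L ^ 2) with hBdef
  have hB : 0 < B := by positivity
  -- the uniform disc bound
  have hdisc : ∀ q ∈ ball p ρ, ∀ (r s : ℝ) (f : ℂ → EuclideanSpace ℂ (Fin n)), 0 < s → s < r →
      DifferentiableOn ℂ f (ball (0 : ℂ) r) → f 0 = q → MapsTo f (ball (0 : ℂ) r) Ω →
      ‖deriv f 0‖ * s ≤ B := by
    intro q hq r s f hs hsr hf hfq hmaps
    have hsb : closedBall (0:ℂ) s ⊆ ball 0 r := closedBall_subset_ball hsr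
    have hK : IsCompact (f '' closedBall (0:ℂ) s) :=
      (isCompact_closedBall _ _).image_of_continuousOn (hf.continuousOn.mono hsb)
    have hKΩ : f '' closedBall (0:ℂ) s ⊆ Ω := by
      rintro _ ⟨z, hz, rfl⟩
      exact hmaps (hsb hz)
    obtain ⟨ψ, hψ, hψε, hψs⟩ := smoothing hopen hcont (M := M)
      (fun z hz => by rw [abs_of_pos (hpos z hz)]; exact hM z hz) hpsh hK hKΩ
      (show 0 < a / 2 by positivity)
    have hψz : ∀ z ∈ closedBall (0:ℂ) s, |ψ (f z) - φ (f z)| ≤ a / 2 := fun z hz =>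
      hψε _ (mem_image_of_mem f hz)
    have hfd : ∀ z ∈ ball (0:ℂ) r, DifferentiableAt ℂ f z := fun z hz =>
      hf.differentiableAt (isOpen_ball.mem_nhds hz)
    apply disc_estimate (u := fun z => ψ (f z)) hs hsr hρ ha hL hf
    · intro z hz
      exact hψ.continuous.continuousAt.comp (hfd z hz).continuousAt
    · intro z0 hz0 k hk
      have hz0r := hsb (ball_subset_closedBall hz0)
      apply comp_submean hψ _ _ k hk
      · filter_upwards [isOpen_ball.mem_nhds hz0r] with w hw
        exact hfd w hw
      · intro A
        exact hψs _ (mem_image_of_mem f (ball_subset_closedBall hz0)) A z0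
    · intro z hz hz1
      have h1 : dist (f z) p < ρ2 := by
        have h2 : dist (f z) q ≤ ρ := by rw [dist_eq_norm, ← hfq]; exact hz1
        have h3 : dist q p < ρ := hq
        have := dist_triangle (f z) q p
        rw [hρdef] at h2 h3
        linarith
      have h2 := hφp h1
      have h3 := (abs_le.1 (hψz z hz)).1
      change 2 * a < ψ (f z)
      linarith
    · intro z hz hz1
      have h1 : R ≤ ‖f z‖ := by
        rw [hLρ, hfq] at hz1
        have h3 : ‖q - p‖ < ρ := by rw [← dist_eq_norm]; exact hq
        have h4 : ‖q‖ ≤ ‖q - p‖ + ‖p‖ := by simpa using norm_add_le (q - p) p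
        have h5 := norm_sub_le (f z) q
        have := le_abs_self R
        linarith
      have h2 := hR _ (hmaps (hsb hz)) h1
      have h3 := (abs_le.1 (hψz z hz)).2
      change ψ (f z) < a
      linarith
    · intro z hz
      have h2 := hM _ (hmaps (hsb hz))
      have h3 := (abs_le.1 (hψz z hz)).2
      change ψ (f z) ≤ M + a / 2
      linarith
  refine ⟨ball p ρ, ball_mem_nhds _ hρ, 1 / B, by positivity, ?_⟩
  rintro q ⟨hq, hqΩ⟩ v
  apply le_csInf
  · obtain ⟨δ, hδ, hδΩ⟩ := Metric.isOpen_iff.1 hopen q hqΩ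
    refine ⟨_, δ / (‖v‖ + 1), by positivity, rfl, fun z => q + z • v, ?_, by simp, ?_, ?_⟩
    · fun_prop
    · have : HasDerivAt (fun z : ℂ => q + z • v) ((1:ℂ) • v) 0 :=
        ((hasDerivAt_id (0:ℂ)).smul_const v).const_add q
      simpa using this.deriv
    · intro z hz
      apply hδΩ
      have hz' : ‖z‖ < δ / (‖v‖ + 1) := by simpa using hz
      rw [lt_div_iff₀ (by positivity)] at hz'
      rw [mem_ball, dist_eq_norm, add_sub_cancel_left, norm_smul]
      nlinarith [norm_nonneg z]
  · rintro c ⟨r, hr, rfl, f, hf, hfq, hfv, hmaps⟩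
    have hle : ‖v‖ * r ≤ B := by
      by_contra! hlt
      have hv : 0 < ‖v‖ := by
        by_contra! h
        have : ‖v‖ * r ≤ 0 := mul_nonpos_of_nonpos_of_nonneg h hr.le
        linarith
      obtain ⟨s, hs1, hs2⟩ := exists_between (show B / ‖v‖ < r by
        rw [div_lt_iff₀ hv]; linarith)
      have hs0 : 0 < s := lt_trans (by positivity) hs1
      have := hdisc q hq r s f hs0 hs2 hf hfq hmaps
      rw [hfv] at this
      rw [div_lt_iff₀ hv] at hs1
      linarith
    rw [div_mul_eq_mul_div, one_mul, div_le_div_iff₀ hB hr, one_mul]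
    exact hle
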